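/- Define J(s) := (s² + 12)³/(108·(s² − 4)²) for s ∈ ℂ with s² ≠ 4. Then for every t ∈ ℂ with t ∉ {0, 2, −2, 6, −6}, one has (−12/t)² ≠ 4, J(t) ≠ 1, and J(−12/t) = J(t)/(J(t) − 1). Moreover, J(t) = 1 holds exactly when t ∈ {0, 6, −6}. -/

import Mathlib

/-!
The proof rests on the polynomial identity
`(s² + 12)³ - 108 (s² - 4)² = s² (s² - 36)²`, which gives
`J(s) - 1 = s² (s² - 36)² / (108 (s² - 4)²)` (`Jq_sub_one`). Hence `J(s) = 1` exactly at
`s = 0, ±6`, and `J(s) / (J(s) - 1) = (s² + 12)³ / (s² (s² - 36)²)`. The substitution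
`s = -12 / t` turns `s² + 12` into `12 (t² + 12) / t²` and `s² - 4` into `-4 (t² - 36) / t²`,
so `J(-12 / t)` is the same fraction.
-/

/-- The absolute invariant `J(q_t) = (t² + 12)³/(108·(t² − 4)²)` of the binary
quartic `q_t`. -/
noncomputable def Jq (s : ℂ) : ℂ := (s ^ 2 + 12) ^ 3 / (108 * (s ^ 2 - 4) ^ 2)

theorem Jq_sub_one {s : ℂ} (hs : s ^ 2 ≠ 4) :
    Jq s - 1 = s ^ 2 * (s ^ 2 - 36) ^ 2 / (108 * (s ^ 2 - 4) ^ 2) := by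
  have h : s ^ 2 - 4 ≠ 0 := sub_ne_zero.mpr hs
  unfold Jq
  field_simp
  ring

theorem Jq_eq_one_iff {s : ℂ} (hs : s ^ 2 ≠ 4) : Jq s = 1 ↔ s = 0 ∨ s = 6 ∨ s = -6 := by
  have h : s ^ 2 - 4 ≠ 0 := sub_ne_zero.mpr hs
  have h36 : s ^ 2 - 36 = 0 ↔ s = 6 ∨ s = -6 := by
    rw [sub_eq_zero, show (36 : ℂ) = 6 ^ 2 by norm_num, sq_eq_sq_iff_eq_or_eq_neg]
  rw [← sub_eq_zero, Jq_sub_one hs]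
  simp [h, h36]

theorem Jq_neg_twelve_div {t : ℂ} (h0 : t ≠ 0) (h36 : t ^ 2 - 36 ≠ 0) :
    Jq (-12 / t) = (t ^ 2 + 12) ^ 3 / (t ^ 2 * (t ^ 2 - 36) ^ 2) := by
  have e1 : (-12 / t) ^ 2 + 12 = 12 * (t ^ 2 + 12) / t ^ 2 := by field_simp; ring
  have e2 : (-12 / t) ^ 2 - 4 = -4 * (t ^ 2 - 36) / t ^ 2 := by field_simp; ring
  unfold Jq
  rw [e1, e2]
  field_simp
  ring

/-- for `t ∉ {0, 2, −2, 6, −6}` one has `(−12/t)² ≠ 4`, `J(t) ≠ 1` and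
`J(−12/t) = J(t)/(J(t) − 1)`; moreover, for `t² ≠ 4`, `J(t) = 1` exactly when
`t ∈ {0, 6, −6}`. -/
theorem Jq_involution :
    (∀ t : ℂ, t ≠ 0 → t ≠ 2 → t ≠ -2 → t ≠ 6 → t ≠ -6 →
      (-12 / t) ^ 2 ≠ 4 ∧ Jq t ≠ 1 ∧ Jq (-12 / t) = Jq t / (Jq t - 1)) ∧
    (∀ t : ℂ, t ^ 2 ≠ 4 → (Jq t = 1 ↔ t = 0 ∨ t = 6 ∨ t = -6)) := by
  refine ⟨fun t h0 h2 h2' h6 h6' => ?_, fun t ht => Jq_eq_one_iff ht⟩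
  have ht : t ^ 2 ≠ 4 := by
    rw [show (4 : ℂ) = 2 ^ 2 by norm_num, Ne, sq_eq_sq_iff_eq_or_eq_neg]
    tauto
  have h4 : t ^ 2 - 4 ≠ 0 := sub_ne_zero.mpr ht
  have h36 : t ^ 2 - 36 ≠ 0 := by
    rw [sub_ne_zero, show (36 : ℂ) = 6 ^ 2 by norm_num, Ne, sq_eq_sq_iff_eq_or_eq_neg]
    tauto
  refine ⟨fun h => h36 ?_, fun h => ?_, ?_⟩
  · rw [div_pow, div_eq_iff (pow_ne_zero 2 h0)] at h
    linear_combination -h / 4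
  · have := (Jq_eq_one_iff ht).mp h
    tauto
  · rw [Jq_neg_twelve_div h0 h36, Jq_sub_one ht, Jq]
    field_simp
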